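/- Let R be a finite nontrivial commutative local principal ideal ring. Let 𝓕 = {F_i}_{i ∈ I} and 𝓖 = {G_j}_{j ∈ J} be families of affine permutations of R such that every F_i commutes with every G_j. If there exist indices r, s ∈ I such that F_r and F_s do not commute, then the family 𝓖 is pairwise commuting: G_j ∘ G_{j′} = G_{j′} ∘ G_j for all j, j′ ∈ J. -/

import Mathlib

/-- Two self-maps of a type commute under composition. -/
def MapsCommute {α : Type*} (f g : α → α) : Prop :=
  f ∘ g = g ∘ f

/-- `f : R → R` is an affine permutation: `x ↦ a·x + b` with `a` a unit of `R`. -/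
def IsAffinePerm {R : Type*} [CommRing R] (f : R → R) : Prop :=
  ∃ a : Rˣ, ∃ b : R, ∀ x, f x = (a : R) * x + b

/-
Affine maps `x ↦ a x + b` and `x ↦ c x + d` commute iff their displacement vectors `(a - 1, b)` and
`(c - 1, d)` in `R²` have vanishing determinant. The ideals of a local Bézout ring form a chain, so
let `v` be a vector of largest content among those of two maps of the first family and two of the
second. It is a multiple `g • u` of a unimodular vector `u`, and every other vector is divisible by
`g`, so the two vectors of the opposite family, both being parallel to `v`, are parallel to each
other.
-/

section Parallel

variable {R : Type*} [CommRing R]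

/-- Two vectors of `R²` are parallel when their `2 × 2` determinant vanishes. This encodes
commutation of affine maps; it is not transitive, even on nonzero vectors, if `R` has zero
divisors. -/
def Parallel (v w : R × R) : Prop :=
  v.1 * w.2 = v.2 * w.1

theorem mapsCommute_iff_parallel {f g : R → R} {a b c d : R}
    (hf : ∀ x, f x = a * x + b) (hg : ∀ x, g x = c * x + d) :
    MapsCommute f g ↔ Parallel (a - 1, b) (c - 1, d) := by
  simp only [MapsCommute, Parallel, funext_iff, Function.comp_apply, hf, hg]
  constructor
  · intro h
    linear_combination h 0
  · intro h x
    linear_combination h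

namespace Parallel

variable {v v' w w' : R × R}

theorem symm (h : Parallel v w) : Parallel w v := by
  unfold Parallel at *
  linear_combination -h

theorem swap (h : Parallel v w) : Parallel v.swap w.swap :=
  Eq.symm h

theorem of_fst_dvd (hw : Parallel v w) (hw' : Parallel v w') (hv : v.1 ∣ v.2)
    (hvw : v.1 ∣ w.1) (hvw' : v.1 ∣ w'.1) : Parallel w w' := by
  obtain ⟨t, ht⟩ := hv
  obtain ⟨x, hx⟩ := hvw
  obtain ⟨y, hy⟩ := hvw'
  unfold Parallel at *
  calc w.1 * w'.2 = x * (v.1 * w'.2) := by rw [hx]; ring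
    _ = x * (v.1 * t * (v.1 * y)) := by rw [hw', ht, hy]
    _ = y * (v.2 * w.1) := by rw [ht, hx]; ring
    _ = w.2 * w'.1 := by rw [← hw, hy]; ring

end Parallel

end Parallel

section Content

variable {R : Type*} [CommRing R]

/-- The content of a vector of `R²`: the ideal generated by its coordinates. It measures the
divisibility of the vector. -/
def content (v : R × R) : Ideal R :=
  Ideal.span {v.1, v.2}

theorem content_swap (v : R × R) : content v.swap = content v :=
  Ideal.span_pair_comm

theorem fst_dvd_fst_of_content_le {v w : R × R} (hv : v.1 ∣ v.2) (h : content w ≤ content v) :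
    v.1 ∣ w.1 := by
  have hspan : content v = Ideal.span {v.1} := Ideal.span_pair_eq_span_left_iff_dvd.mpr hv
  rw [← Ideal.mem_span_singleton, ← hspan]
  exact h (Ideal.subset_span (Set.mem_insert _ _))

end Content

section PreValuationRing

variable {R : Type*} [CommRing R]

theorem preValuationRing_of_isLocalRing_of_isBezout [IsLocalRing R] [IsBezout R] :
    PreValuationRing R := by
  refine PreValuationRing.iff_dvd_total.mpr ⟨fun a b => ?_⟩
  obtain ⟨x, hx⟩ := IsBezout.gcd_dvd_left a b
  obtain ⟨y, hy⟩ := IsBezout.gcd_dvd_right a b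
  obtain ⟨s, t, hst⟩ := IsBezout.gcd_eq_sum a b
  set g := IsBezout.gcd a b
  have hg : g * (1 - (s * x + t * y)) = 0 := by
    linear_combination s * hx + t * hy - hst
  rcases IsLocalRing.isUnit_or_isUnit_one_sub_self (s * x + t * y) with hunit | hunit
  · rw [hx, hy]
    exact (IsLocalRing.isUnit_or_isUnit_of_isUnit_add hunit).imp
      (fun h => mul_dvd_mul_left g (isUnit_of_mul_isUnit_right h).dvd)
      (fun h => mul_dvd_mul_left g (isUnit_of_mul_isUnit_right h).dvd)
  · have hg0 : g = 0 := hunit.mul_left_eq_zero.mp hg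
    exact Or.inl (by simp [hy, hg0])

variable [PreValuationRing R] {v v' w w' : R × R}

theorem Parallel.of_content_le (hw : Parallel v w) (hw' : Parallel v w')
    (hvw : content w ≤ content v) (hvw' : content w' ≤ content v) : Parallel w w' := by
  rcases ValuationRing.dvd_total v.1 v.2 with hv | hv
  · exact hw.of_fst_dvd hw' hv (fst_dvd_fst_of_content_le hv hvw)
      (fst_dvd_fst_of_content_le hv hvw')
  · simp only [← content_swap v, ← content_swap w, ← content_swap w'] at hvw hvw'
    exact (hw.swap.of_fst_dvd hw'.swap hv (fst_dvd_fst_of_content_le hv hvw)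
      (fst_dvd_fst_of_content_le hv hvw')).swap

theorem parallel_or_parallel (hvw : Parallel v w) (hvw' : Parallel v w')
    (hv'w : Parallel v' w) (hv'w' : Parallel v' w') : Parallel v v' ∨ Parallel w w' := by
  have total (A B : Ideal R) : A ≤ B ∨ B ≤ A :=
    (PreValuationRing.iff_ideal_total.mp inferInstance).total A B
  wlog hv : content v' ≤ content v generalizing v v'
  · exact (this hv'w hv'w' hvw hvw' ((total _ _).resolve_left hv)).imp_left Parallel.symm
  wlog hw : content w' ≤ content w generalizing w w'
  · exact (this hvw' hvw hv'w' hv'w ((total _ _).resolve_left hw)).imp_right Parallel.symm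
  rcases total (content v) (content w) with h | h
  · exact Or.inl (hvw.symm.of_content_le hv'w.symm h (hv.trans h))
  · exact Or.inr (hvw.of_content_le hvw' h (hw.trans h))

end PreValuationRing

theorem family_local_obstruction_general {R : Type*} [CommRing R] [PreValuationRing R]
    {I J : Type*} (F : I → R → R) (G : J → R → R)
    (hF : ∀ i, ∃ a b : R, ∀ x, F i x = a * x + b) (hG : ∀ j, ∃ a b : R, ∀ x, G j x = a * x + b)
    (hcross : ∀ i j, MapsCommute (F i) (G j)) (r s : I) (hrs : ¬ MapsCommute (F r) (F s)) :
    ∀ j j', MapsCommute (G j) (G j') := by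
  intro j j'
  choose a b hF using hF
  choose c d hG using hG
  simp only [mapsCommute_iff_parallel (hF _) (hF _), mapsCommute_iff_parallel (hF _) (hG _),
    mapsCommute_iff_parallel (hG _) (hG _)] at hcross hrs ⊢
  exact (parallel_or_parallel (hcross r j) (hcross r j') (hcross s j) (hcross s j')).resolve_left
    hrs

/-- **Family version of the local obstruction.** Over a finite nontrivial commutative
local principal ideal ring `R`, if `𝓕 = {F i}` and `𝓖 = {G j}` are families of affine
permutations such that every `F i` commutes with every `G j`, and `𝓕` contains a
noncommuting pair, then `𝓖` is pairwise commuting. -/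
theorem family_local_obstruction {R : Type*} [CommRing R] [Finite R] [Nontrivial R]
    [IsLocalRing R] [IsPrincipalIdealRing R]
    {I J : Type*} (F : I → R → R) (G : J → R → R)
    (hF : ∀ i, IsAffinePerm (F i)) (hG : ∀ j, IsAffinePerm (G j))
    (hcross : ∀ i j, MapsCommute (F i) (G j))
    (r s : I) (hrs : ¬ MapsCommute (F r) (F s)) :
    ∀ j j', MapsCommute (G j) (G j') := by
  have := preValuationRing_of_isLocalRing_of_isBezout (R := R)
  exact family_local_obstruction_general F G (fun i => let ⟨a, b, h⟩ := hF i; ⟨a, b, h⟩)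
    (fun j => let ⟨c, d, h⟩ := hG j; ⟨c, d, h⟩) hcross r s hrs
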